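/- Let n be a positive odd integer and d a positive integer with gcd(n,d)=1. Let r be an integer with n−dn+d ≤ r ≤ n and n ≡ r (mod d). Then, modulo Φ_n(−q)^3 Φ_n(q)^2, one has Σ_{k=0}^{(n−r)/d} (−1)^k · (1+q^{2dk+r})(q^{2r};q^{2d})_k^3 / ((1+q^r)(q^{2d};q^{2d})_k^3) · q^{dk^2+2k(d−r)} ≡ (−1)^{(n−r)/d} · ([n]_{q^2}/[r]_{q^2}) · q^{(n−r)(n+r−d)/d} · Σ_{k=0}^{(n−r)/d} (q^{2r};q^{2d})_k^2 (q^d;q^{2d})_k / ((q^{2d}, q^{d+r}, q^{2d+r}; q^{2d})_k) · q^{2k(d−r)}. -/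

import Mathlib

open Finset Polynomial

/-- The q-shifted factorial `(x; q)_k = ∏_{j=0}^{k-1} (1 - x q^j)`. -/
noncomputable def qPoch (x q : RatFunc ℚ) (k : ℕ) : RatFunc ℚ :=
  ∏ j ∈ Finset.range k, (1 - x * q ^ j)

/-- The q-integer `[m]_q = (1 - q^m)/(1 - q)` (with integer `m`). -/
noncomputable def qInt (q : RatFunc ℚ) (m : ℤ) : RatFunc ℚ :=
  (1 - q ^ m) / (1 - q)

/-!
Put `w = q ^ n` and insert a free parameter `t` in both sums, symmetrically in `t` and `t⁻¹`, so
that after clearing denominators their difference is a polynomial in `y = t + t⁻¹`; the theorem is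
the case `t = 1`. For `t = w ^ 2` the two sums terminate, and they agree by Bailey's lemma applied
to a suitable Bailey pair, so the difference at `y = 2` is divisible by
`2 - (w ^ 2 + w⁻¹ ^ 2) = -(w - w⁻¹) ^ 2`. One further factor `1 + w` divides the left-hand sum for
every `t`, because its terms of index `k` and `N - k` cancel when `w = -1`, and it divides the
coefficient `[n]_{q²}` of the right-hand sum. The factor `1 - w` of that coefficient cancels the
only denominator factor of the right-hand sum not coprime to `Φ_n(q²)`. So the difference at
`y = 2` is `(1 + w) (1 - w ^ 2) ^ 2`, a multiple of `Φ_n(-q) ^ 3 Φ_n(q) ^ 2`, times a fraction with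
denominator coprime to `Φ_n(q²) = ± Φ_n(q) Φ_n(-q)`.
-/

section CommRing

variable {R : Type*} [CommRing R]

/-- The q-shifted factorial `(x; q)_k` over an arbitrary commutative ring. -/
def qPochhammer (x q : R) (k : ℕ) : R :=
  ∏ j ∈ range k, (1 - x * q ^ j)

/-- The product `(x t, x t⁻¹; q)_k` written through `y = t + t⁻¹`, so that it is a polynomial in
`y` and makes sense without a unit `t`. -/
def qPochhammerPair (x y q : R) (k : ℕ) : R :=
  ∏ j ∈ range k, (1 - x * q ^ j * y + (x * q ^ j) ^ 2)

@[simp]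
lemma qPochhammer_zero (x q : R) : qPochhammer x q 0 = 1 := prod_range_zero _

lemma qPochhammer_succ (x q : R) (k : ℕ) :
    qPochhammer x q (k + 1) = qPochhammer x q k * (1 - x * q ^ k) := prod_range_succ _ _

lemma qPochhammer_add (x q : R) (k l : ℕ) :
    qPochhammer x q (k + l) = qPochhammer x q k * qPochhammer (x * q ^ k) q l := by
  simp only [qPochhammer, prod_range_add, pow_add, mul_assoc]

lemma qPochhammer_succ' (x q : R) (k : ℕ) :
    qPochhammer x q (k + 1) = (1 - x) * qPochhammer (x * q) q k := by
  rw [add_comm, qPochhammer_add, qPochhammer_succ, qPochhammer_zero, pow_zero, pow_one, mul_one,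
    one_mul]

lemma qPochhammer_two_mul (x q : R) (k : ℕ) :
    qPochhammer x q (2 * k) = qPochhammer x (q ^ 2) k * qPochhammer (x * q) (q ^ 2) k := by
  induction k with
  | zero => rw [mul_zero, qPochhammer_zero, qPochhammer_zero, qPochhammer_zero, mul_one]
  | succ k ih => rw [mul_add_one, qPochhammer_succ, qPochhammer_succ, ih, qPochhammer_succ,
      qPochhammer_succ]; ring

lemma qPochhammerPair_two (x q : R) (k : ℕ) :
    qPochhammerPair x 2 q k = qPochhammer x q k ^ 2 := by
  rw [qPochhammer, ← prod_pow]
  exact prod_congr rfl fun j _ => by ring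

lemma qPochhammerPair_add_inv {t t' : R} (ht : t * t' = 1) (x q : R) (k : ℕ) :
    qPochhammerPair x (t + t') q k = qPochhammer (x * t) q k * qPochhammer (x * t') q k := by
  rw [qPochhammer, qPochhammer, ← prod_mul_distrib]
  exact prod_congr rfl fun j _ => by linear_combination -(x * q ^ j) ^ 2 * ht

lemma prod_range_mul_pow (x q : R) (k : ℕ) :
    ∏ j ∈ range k, x * q ^ j = x ^ k * q ^ k.choose 2 := by
  rw [prod_mul_distrib, prod_const, card_range, prod_pow_eq_pow_sum, sum_range_id,
    Nat.choose_two_right]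

lemma mul_pow_reflect {x z q : R} {k : ℕ} (hq : IsUnit q) (h : x * z * q ^ k = q) {j : ℕ}
    (hj : j ∈ range k) : x * q ^ j * (z * q ^ (k - 1 - j)) = 1 := by
  have hexp : j + (k - 1 - j) + 1 = k := by have := mem_range.mp hj; omega
  refine hq.mul_right_cancel ?_
  calc x * q ^ j * (z * q ^ (k - 1 - j)) * q = x * z * q ^ (j + (k - 1 - j) + 1) := by ring
    _ = 1 * q := by rw [hexp, h, one_mul]

lemma qPochhammer_reverse {x z q : R} {k : ℕ} (hq : IsUnit q) (h : x * z * q ^ k = q) :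
    qPochhammer x q k = (-x) ^ k * q ^ k.choose 2 * qPochhammer z q k := by
  rw [← prod_range_mul_pow, qPochhammer, qPochhammer, ← prod_range_reflect (fun j => 1 - z * q ^ j),
    ← prod_mul_distrib]
  exact prod_congr rfl fun j hj => by linear_combination -mul_pow_reflect hq h hj

lemma qPochhammerPair_reverse {x z q : R} {k : ℕ} (hq : IsUnit q) (h : x * z * q ^ k = q) (y : R) :
    qPochhammerPair x y q k = (x ^ k * q ^ k.choose 2) ^ 2 * qPochhammerPair z y q k := by
  rw [← prod_range_mul_pow, qPochhammerPair, qPochhammerPair,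
    ← prod_range_reflect (fun j => 1 - z * q ^ j * y + (z * q ^ j) ^ 2), ← prod_pow,
    ← prod_mul_distrib]
  refine prod_congr rfl fun j hj => ?_
  have hinv := mul_pow_reflect hq h hj
  generalize x * q ^ j = u at *
  generalize z * q ^ (k - 1 - j) = u' at *
  linear_combination (-(1 + u * u') + u * y) * hinv

lemma map_qPochhammer {S : Type*} [CommRing S] (f : R →+* S) (x q : R) (k : ℕ) :
    f (qPochhammer x q k) = qPochhammer (f x) (f q) k := by
  simp only [qPochhammer, map_prod, map_sub, map_one, map_mul, map_pow]

lemma map_qPochhammerPair {S : Type*} [CommRing S] (f : R →+* S) (x y q : R) (k : ℕ) :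
    f (qPochhammerPair x y q k) = qPochhammerPair (f x) (f y) (f q) k := by
  simp only [qPochhammerPair, map_prod, map_add, map_sub, map_one, map_mul, map_pow]

lemma qPochhammer_ne_zero [IsDomain R] {x q : R} (h : ∀ j : ℕ, x * q ^ j ≠ 1) (k : ℕ) :
    qPochhammer x q k ≠ 0 :=
  prod_ne_zero_iff.mpr fun j _ => sub_ne_zero.mpr (h j).symm

lemma qPochhammer_self_ne_zero [IsDomain R] {q : R} (hq : ∀ i : ℕ, q ^ (i + 1) ≠ 1) (k : ℕ) :
    qPochhammer q q k ≠ 0 :=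
  qPochhammer_ne_zero (fun j => by rw [← pow_succ']; exact hq j) k

lemma qPochhammer_mul_self_ne_zero [IsDomain R] {a q : R} (ha : ∀ i : ℕ, a * q ^ i ≠ 1) (k : ℕ) :
    qPochhammer (a * q) q k ≠ 0 :=
  qPochhammer_ne_zero (fun j => by rw [mul_assoc, ← pow_succ']; exact ha _) k

end CommRing

lemma sum_antidiagonal_assoc {M : Type*} [AddCommMonoid M] (g : ℕ → ℕ → ℕ → M) (N : ℕ) :
    ∑ mj ∈ antidiagonal N, ∑ kl ∈ antidiagonal mj.1, g kl.1 kl.2 mj.2 =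
      ∑ ki ∈ antidiagonal N, ∑ lj ∈ antidiagonal ki.2, g ki.1 lj.1 lj.2 := by
  rw [sum_sigma', sum_sigma']
  refine sum_nbij' (fun t => ⟨(t.2.1, t.2.2 + t.1.2), (t.2.2, t.1.2)⟩)
    (fun t => ⟨(t.1.1 + t.2.1, t.2.2), (t.1.1, t.2.1)⟩) ?_ ?_ ?_ ?_ fun _ _ => rfl <;>
  · rintro ⟨⟨_, _⟩, _, _⟩ h
    simp only [mem_sigma, HasAntidiagonal.mem_antidiagonal] at h ⊢
    grind

lemma sum_antidiagonal_succ_of_telescope {M : Type*} [AddCommGroup M]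
    {f g G : ℕ → ℕ → M} (m : ℕ) (hG : G 0 (m + 1) = 0)
    (htop : f (m + 1) 0 = -G (m + 1) 0)
    (hstep : ∀ k l, k + l = m → f k (l + 1) = g k l + (G (k + 1) l - G k (l + 1))) :
    ∑ kl ∈ antidiagonal (m + 1), f kl.1 kl.2 = ∑ kl ∈ antidiagonal m, g kl.1 kl.2 := by
  have hleft := Nat.sum_antidiagonal_succ (n := m) (f := fun kl => G kl.1 kl.2)
  have hright := Nat.sum_antidiagonal_succ' (n := m) (f := fun kl => G kl.1 kl.2)
  rw [Nat.sum_antidiagonal_succ', sum_congr rfl fun kl hkl =>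
    hstep kl.1 kl.2 (HasAntidiagonal.mem_antidiagonal.mp hkl), sum_add_distrib, sum_sub_distrib]
  rw [hG, zero_add] at hleft
  have hshift : ∑ kl ∈ antidiagonal m, G (kl.1 + 1) kl.2 =
      G (m + 1) 0 + ∑ kl ∈ antidiagonal m, G kl.1 (kl.2 + 1) := hleft.symm.trans hright
  rw [htop, hshift]
  abel

lemma add_choose_two (k l : ℕ) : (k + l).choose 2 = k.choose 2 + l.choose 2 + k * l := by
  induction l with
  | zero => rfl
  | succ l ih =>
    rw [← add_assoc, Nat.choose_succ_succ' (k + l) 1, Nat.choose_succ_succ' l 1, ih,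
      Nat.choose_one_right, Nat.choose_one_right]
    ring

section Field

variable {K : Type*} [Field K]

-- The term `(i, j)` of the left-hand sum is split by
-- `1 - q ^ (i + j) = q ^ i (1 - q ^ j) + (1 - q ^ i)`.
lemma sum_antidiagonal_qPascal {q : K} (hq : ∀ i : ℕ, q ^ (i + 1) ≠ 1) (f : ℕ → ℕ → K) (M : ℕ) :
    (1 - q ^ (M + 1)) * ∑ ij ∈ antidiagonal (M + 1),
        f ij.1 ij.2 / (qPochhammer q q ij.1 * qPochhammer q q ij.2) =
      ∑ ij ∈ antidiagonal M, (q ^ ij.1 * f ij.1 (ij.2 + 1) + f (ij.1 + 1) ij.2) /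
        (qPochhammer q q ij.1 * qPochhammer q q ij.2) := by
  have hne := qPochhammer_self_ne_zero hq
  have hfac (i : ℕ) : 1 - q * q ^ i ≠ 0 := by
    rw [← pow_succ']; exact sub_ne_zero.mpr (hq i).symm
  have hsplit : (1 - q ^ (M + 1)) * ∑ ij ∈ antidiagonal (M + 1),
        f ij.1 ij.2 / (qPochhammer q q ij.1 * qPochhammer q q ij.2) =
      ∑ ij ∈ antidiagonal (M + 1), (q ^ ij.1 * (1 - q ^ ij.2) * f ij.1 ij.2) /
        (qPochhammer q q ij.1 * qPochhammer q q ij.2) +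
      ∑ ij ∈ antidiagonal (M + 1), ((1 - q ^ ij.1) * f ij.1 ij.2) /
        (qPochhammer q q ij.1 * qPochhammer q q ij.2) := by
    rw [mul_sum, ← sum_add_distrib]
    refine sum_congr rfl fun ij hij => ?_
    rw [← HasAntidiagonal.mem_antidiagonal.mp hij, pow_add]
    ring
  rw [hsplit, Nat.sum_antidiagonal_succ', Nat.sum_antidiagonal_succ]
  simp only [pow_zero, sub_self, mul_zero, zero_mul, zero_div, zero_add]
  rw [← sum_add_distrib]
  refine sum_congr rfl fun ij _ => ?_
  have hi := hne ij.1
  have hj := hne ij.2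
  have hfi := hfac ij.1
  have hfj := hfac ij.2
  rw [qPochhammer_succ q q ij.1, qPochhammer_succ q q ij.2, pow_succ', pow_succ']
  generalize q * q ^ ij.1 = qi at *
  field_simp

lemma qChuVandermonde_cleared {q : K} (hq : ∀ i : ℕ, q ^ (i + 1) ≠ 1) (b : K) (M : ℕ) (u : K) :
    ∑ ij ∈ antidiagonal M, qPochhammer b q ij.1 * (-u) ^ ij.1 * q ^ ij.1.choose 2 *
        qPochhammer (b * u * q ^ ij.1) q ij.2 / (qPochhammer q q ij.1 * qPochhammer q q ij.2) =
      qPochhammer u q M / qPochhammer q q M := by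
  induction M generalizing u with
  | zero => simp
  | succ M ih =>
    have hfac : 1 - q ^ (M + 1) ≠ 0 := sub_ne_zero.mpr (hq M).symm
    refine mul_left_cancel₀ hfac ?_
    rw [sum_antidiagonal_qPascal hq fun i j => qPochhammer b q i * (-u) ^ i * q ^ i.choose 2 *
      qPochhammer (b * u * q ^ i) q j]
    calc _ = (1 - u) * ∑ ij ∈ antidiagonal M, qPochhammer b q ij.1 * (-(u * q)) ^ ij.1 *
            q ^ ij.1.choose 2 * qPochhammer (b * (u * q) * q ^ ij.1) q ij.2 /
            (qPochhammer q q ij.1 * qPochhammer q q ij.2) := by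
          rw [mul_sum]
          refine sum_congr rfl fun ij _ => ?_
          rw [← mul_div_assoc, qPochhammer_succ', qPochhammer_succ, Nat.choose_succ_succ' ij.1 1,
            Nat.choose_one_right, show b * u * q ^ ij.1 * q = b * (u * q) * q ^ ij.1 by ring,
            show b * u * q ^ (ij.1 + 1) = b * (u * q) * q ^ ij.1 by ring]
          ring
      _ = (1 - u) * (qPochhammer (u * q) q M / qPochhammer q q M) := by rw [ih]
      _ = (1 - q ^ (M + 1)) * (qPochhammer u q (M + 1) / qPochhammer q q (M + 1)) := by
          rw [qPochhammer_succ' u, qPochhammer_succ q, ← pow_succ']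
          have hne := qPochhammer_self_ne_zero hq M
          field_simp

lemma qChuVandermonde {q b u : K} (hq : ∀ i : ℕ, q ^ (i + 1) ≠ 1)
    (hbu : ∀ j : ℕ, b * u * q ^ j ≠ 1) (M : ℕ) :
    ∑ ij ∈ antidiagonal M, qPochhammer b q ij.1 * (-u) ^ ij.1 * q ^ ij.1.choose 2 /
        (qPochhammer q q ij.1 * qPochhammer q q ij.2 * qPochhammer (b * u) q ij.1) =
      qPochhammer u q M / (qPochhammer q q M * qPochhammer (b * u) q M) := by
  rw [← div_div, ← qChuVandermonde_cleared hq b M u, sum_div]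
  refine sum_congr rfl fun ij hij => ?_
  have htail : qPochhammer (b * u * q ^ ij.1) q ij.2 ≠ 0 :=
    qPochhammer_ne_zero (fun j => by rw [mul_assoc, ← pow_add]; exact hbu _) _
  have hi := qPochhammer_self_ne_zero hq ij.1
  have hj := qPochhammer_self_ne_zero hq ij.2
  rw [← HasAntidiagonal.mem_antidiagonal.mp hij, qPochhammer_add (b * u)]
  generalize qPochhammer (b * u * q ^ ij.1) q ij.2 = t at *
  field_simp [qPochhammer_ne_zero hbu ij.1]

/-- A Bailey pair relative to `a`, in base `q`. The index `m + k` of the usual definition is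
written `2 k + l` with `m = k + l`. -/
def IsBaileyPair (a q : K) (α β : ℕ → K) : Prop :=
  ∀ m, β m = ∑ kl ∈ antidiagonal m,
    α kl.1 / (qPochhammer q q kl.2 * qPochhammer (a * q) q (2 * kl.1 + kl.2))

lemma sum_qChuVandermonde_shift {a q b v : K} (hq : ∀ i : ℕ, q ^ (i + 1) ≠ 1)
    (ha : ∀ i : ℕ, a * q ^ i ≠ 1) (hbv : b * v = a) (k M : ℕ) :
    ∑ lj ∈ antidiagonal M, qPochhammer b q (k + lj.1) * (-v) ^ (k + lj.1) *
        q ^ (k + lj.1 + 1).choose 2 / (qPochhammer q q lj.1 * qPochhammer q q lj.2 *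
          qPochhammer (a * q) q (2 * k + lj.1)) =
      qPochhammer b q k * (-v) ^ k * q ^ (k + 1).choose 2 * qPochhammer (v * q ^ (k + 1)) q M /
        (qPochhammer q q M * qPochhammer (a * q) q (2 * k + M)) := by
  have hbase : b * q ^ k * (v * q ^ (k + 1)) = a * q * q ^ (2 * k) := by
    rw [← hbv]; ring
  have hbase_ne (j : ℕ) : b * q ^ k * (v * q ^ (k + 1)) * q ^ j ≠ 1 := by
    rw [hbase]; convert ha (2 * k + j + 1) using 1; ring
  have hcv := qChuVandermonde hq hbase_ne M
  rw [hbase] at hcv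
  calc _ = qPochhammer b q k * (-v) ^ k * q ^ (k + 1).choose 2 /
        qPochhammer (a * q) q (2 * k) * (qPochhammer (v * q ^ (k + 1)) q M /
          (qPochhammer q q M * qPochhammer (a * q * q ^ (2 * k)) q M)) := by
        rw [← hcv, mul_sum]
        refine sum_congr rfl fun lj _ => ?_
        rw [add_right_comm k lj.1 1, add_choose_two, qPochhammer_add b, qPochhammer_add (a * q)]
        ring
    _ = _ := by rw [qPochhammer_add (a * q)]; ring

/-- The case of Bailey's lemma in which one of its two free parameters tends to infinity; the other
one is `b`, and `v = a / b`. -/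
lemma IsBaileyPair.sum_eq {a q b v : K} {α β : ℕ → K} (h : IsBaileyPair a q α β)
    (hq : ∀ i : ℕ, q ^ (i + 1) ≠ 1) (ha : ∀ i : ℕ, a * q ^ i ≠ 1) (hbv : b * v = a) (N : ℕ) :
    ∑ mj ∈ antidiagonal N, β mj.1 * (qPochhammer b q mj.1 * (-v) ^ mj.1 *
        q ^ (mj.1 + 1).choose 2 / qPochhammer q q mj.2) =
      ∑ ki ∈ antidiagonal N, α ki.1 * (qPochhammer b q ki.1 * (-v) ^ ki.1 *
        q ^ (ki.1 + 1).choose 2 * qPochhammer (v * q ^ (ki.1 + 1)) q ki.2 /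
        (qPochhammer q q ki.2 * qPochhammer (a * q) q (2 * ki.1 + ki.2))) := by
  let g (k l j : ℕ) : K := α k * (qPochhammer b q (k + l) * (-v) ^ (k + l) *
    q ^ (k + l + 1).choose 2 / (qPochhammer q q l * qPochhammer q q j *
      qPochhammer (a * q) q (2 * k + l)))
  calc _ = ∑ mj ∈ antidiagonal N, ∑ kl ∈ antidiagonal mj.1, g kl.1 kl.2 mj.2 :=
        sum_congr rfl fun mj _ => by
          rw [h mj.1, sum_mul]
          refine sum_congr rfl fun kl hkl => ?_
          rw [← HasAntidiagonal.mem_antidiagonal.mp hkl]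
          ring
    _ = ∑ ki ∈ antidiagonal N, ∑ lj ∈ antidiagonal ki.2, g ki.1 lj.1 lj.2 :=
        sum_antidiagonal_assoc g N
    _ = _ := sum_congr rfl fun ki _ => by
        rw [← mul_sum, sum_qChuVandermonde_shift hq ha hbv]

lemma qPochhammer_inv_pow {a q v : K} (hq : q ≠ 0) (ha : a ≠ 0) {k i : ℕ}
    (hv : a * q ^ (k + i) * v = 1) :
    qPochhammer (a * v) q k * qPochhammer q q i * (q / a) ^ k =
      (-v) ^ k * q ^ (k + 1).choose 2 * qPochhammer q q (k + i) := by
  have hrev : a * v * q ^ (i + 1) * q ^ k = q := by linear_combination q * hv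
  rw [qPochhammer_reverse hq.isUnit hrev, add_comm k i, qPochhammer_add q q i, ← pow_succ']
  generalize qPochhammer (q ^ (i + 1)) q k = t
  rw [Nat.choose_succ_succ' k 1, Nat.choose_one_right, pow_add, ← mul_neg, mul_pow, div_pow]
  field_simp

-- `v = (a qᴺ)⁻¹` with `N = k + i`, and `a v = q⁻ᴺ` makes the product terminate.
lemma pow_mul_qPochhammerPair {a q v : K} (hq0 : q ≠ 0) (ha0 : a ≠ 0)
    (hq : ∀ i : ℕ, q ^ (i + 1) ≠ 1) {k i : ℕ} (hv : a * q ^ (k + i) * v = 1) :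
    (q / a) ^ k * qPochhammerPair a (a * q ^ (k + i) + v) q k =
      qPochhammer q q (k + i) * (qPochhammer (a * (a * q ^ (k + i))) q k * (-v) ^ k *
        q ^ (k + 1).choose 2 / qPochhammer q q i) := by
  have hi := qPochhammer_self_ne_zero hq i
  rw [qPochhammerPair_add_inv hv, ← mul_div_assoc, eq_div_iff hi]
  linear_combination qPochhammer (a * (a * q ^ (k + i))) q k * qPochhammer_inv_pow hq0 ha0 hv

lemma qPochhammerPair_self {a q v : K} (hq0 : q ≠ 0) (ha : a ≠ 1) {N : ℕ}
    (hv : a * q ^ N * v = 1) :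
    (1 - a * q ^ N) / (1 - a) * ((-a) ^ N * q ^ N.choose 2) *
      qPochhammerPair q (a * q ^ N + v) q N = qPochhammer (a * q) q (N + N) := by
  have hrev := qPochhammer_reverse (x := a) (z := q * v) (k := N) hq0.isUnit
    (by linear_combination q * hv)
  have hshift : (1 - a) * qPochhammer (a * q) q N = qPochhammer a q N * (1 - a * q ^ N) := by
    rw [← qPochhammer_succ', qPochhammer_succ]
  rw [qPochhammerPair_add_inv hv, qPochhammer_add, show q * (a * q ^ N) = a * q * q ^ N by ring,
    eq_div_of_mul_eq (sub_ne_zero.mpr ha.symm) ((mul_comm _ _).trans hshift), hrev]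
  ring

lemma pow_mul_qPochhammerPair_mul {a q v : K} (hq0 : q ≠ 0) (ha0 : a ≠ 0)
    (hq : ∀ i : ℕ, q ^ (i + 1) ≠ 1) (ha : ∀ i : ℕ, a * q ^ i ≠ 1) {k i : ℕ}
    (hv : a * q ^ (k + i) * v = 1) :
    (q / a) ^ k * (qPochhammerPair a (a * q ^ (k + i) + v) q k *
      qPochhammerPair (q ^ (k + 1)) (a * q ^ (k + i) + v) q i) =
      qPochhammer q q (k + i) * qPochhammer (a * q) q (k + i + (k + i)) *
        (qPochhammer (a * (a * q ^ (k + i))) q k * (-v) ^ k * q ^ (k + 1).choose 2 *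
          qPochhammer (v * q ^ (k + 1)) q i /
          (qPochhammer q q i * qPochhammer (a * q) q (2 * k + i))) := by
  have hne := qPochhammer_mul_self_ne_zero ha (2 * k + i)
  rw [← mul_assoc, pow_mul_qPochhammerPair hq0 ha0 hq hv, qPochhammerPair_add_inv hv,
    show k + i + (k + i) = 2 * k + i + i by omega, qPochhammer_add (a * q) q (2 * k + i) i,
    show q ^ (k + 1) * (a * q ^ (k + i)) = a * q * q ^ (2 * k + i) by ring, mul_comm v]
  generalize qPochhammer (a * q * q ^ (2 * k + i)) q i = t
  generalize qPochhammer (a * q) q (2 * k + i) = t' at *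
  field_simp

/-- Bailey's lemma with both free parameters chosen so that the sums terminate: they are
`a² qᴺ` and `q⁻ᴺ`, that is `a t` and `a t⁻¹` with `t = a qᴺ`. -/
lemma IsBaileyPair.sum_pair_eq {a q v : K} {α β : ℕ → K} (h : IsBaileyPair a q α β)
    (hq0 : q ≠ 0) (ha0 : a ≠ 0) (hq : ∀ i : ℕ, q ^ (i + 1) ≠ 1) (ha : ∀ i : ℕ, a * q ^ i ≠ 1)
    {N : ℕ} (hv : a * q ^ N * v = 1) :
    ∑ ki ∈ antidiagonal N, α ki.1 * ((q / a) ^ ki.1 *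
        (qPochhammerPair a (a * q ^ N + v) q ki.1 *
          qPochhammerPair (q ^ (ki.1 + 1)) (a * q ^ N + v) q ki.2)) =
      (1 - a * q ^ N) / (1 - a) * ((-a) ^ N * q ^ N.choose 2) *
        (qPochhammerPair q (a * q ^ N + v) q N * ∑ mj ∈ antidiagonal N,
          β mj.1 * ((q / a) ^ mj.1 * qPochhammerPair a (a * q ^ N + v) q mj.1)) := by
  have ha1 : a ≠ 1 := by simpa using ha 0
  have hsum := congrArg (qPochhammer q q N * qPochhammer (a * q) q (N + N) * ·)
    (h.sum_eq hq ha (b := a * (a * q ^ N)) (v := v) (by linear_combination a * hv) N)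
  simp only [mul_sum] at hsum
  rw [← mul_assoc, qPochhammerPair_self hq0 ha1 hv, mul_sum]
  refine (sum_congr rfl fun ki hki => ?_).trans (hsum.symm.trans (sum_congr rfl fun mj hmj => ?_))
  · obtain rfl := HasAntidiagonal.mem_antidiagonal.mp hki
    rw [pow_mul_qPochhammerPair_mul hq0 ha0 hq ha hv]
    ring
  · obtain rfl := HasAntidiagonal.mem_antidiagonal.mp hmj
    rw [pow_mul_qPochhammerPair hq0 ha0 hq hv]
    ring

/-- The first member of the Bailey pair relative to `s²` in base `p²` to which Bailey's lemma is
applied. -/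
def wellPoisedAlpha (p s : K) (k : ℕ) : K :=
  (-1) ^ k * p ^ k ^ 2 * (1 + s * p ^ (2 * k)) * qPochhammer (s ^ 2) (p ^ 2) k /
    ((1 + s) * qPochhammer (p ^ 2) (p ^ 2) k)

/-- The second member of the Bailey pair `wellPoisedAlpha`. -/
def wellPoisedBeta (p s : K) (m : ℕ) : K :=
  qPochhammer p (p ^ 2) m / (qPochhammer (p ^ 2) (p ^ 2) m * qPochhammer (s * p) p (2 * m))

section WellPoised

variable {p s : K}

lemma one_sub_mul_pow_ne_zero (ha : ∀ i : ℕ, s ^ 2 * (p ^ 2) ^ i ≠ 1) (j : ℕ) :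
    1 - s * p ^ j ≠ 0 := fun h =>
  ha j (by linear_combination -(1 + s * p ^ j) * h)

lemma one_add_mul_pow_ne_zero (ha : ∀ i : ℕ, s ^ 2 * (p ^ 2) ^ i ≠ 1) (j : ℕ) :
    1 + s * p ^ j ≠ 0 := fun h =>
  ha j (by linear_combination (s * p ^ j - 1) * h)

lemma wellPoisedBeta_succ (hq : ∀ i : ℕ, (p ^ 2) ^ (i + 1) ≠ 1)
    (ha : ∀ i : ℕ, s ^ 2 * (p ^ 2) ^ i ≠ 1) (m : ℕ) :
    (1 - p ^ (2 * m + 2)) * (1 - s * p ^ (2 * m + 1)) * (1 - s * p ^ (2 * m + 2)) *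
        wellPoisedBeta p s (m + 1) = (1 - p ^ (2 * m + 1)) * wellPoisedBeta p s m := by
  have hs (j : ℕ) : s * p ^ j ≠ 1 := (sub_ne_zero.mp (one_sub_mul_pow_ne_zero ha j)).symm
  have hq1 : qPochhammer (p ^ 2) (p ^ 2) (m + 1) =
      qPochhammer (p ^ 2) (p ^ 2) m * (1 - p ^ (2 * m + 2)) := by rw [qPochhammer_succ]; ring
  have hs2 : qPochhammer (s * p) p (2 * m + 2) = qPochhammer (s * p) p (2 * m) *
      ((1 - s * p ^ (2 * m + 1)) * (1 - s * p ^ (2 * m + 2))) := by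
    rw [qPochhammer_succ, qPochhammer_succ]; ring
  have hc1 := right_ne_zero_of_mul (hq1 ▸ qPochhammer_self_ne_zero hq (m + 1))
  have hc2 := right_ne_zero_of_mul (hs2 ▸ qPochhammer_mul_self_ne_zero hs (2 * m + 2))
  rw [wellPoisedBeta, wellPoisedBeta, mul_add_one, hq1, hs2, qPochhammer_succ, ← pow_mul,
    ← pow_succ', mul_assoc (1 - p ^ (2 * m + 2))]
  generalize 1 - p ^ (2 * m + 2) = c1 at *
  generalize (1 - s * p ^ (2 * m + 1)) * (1 - s * p ^ (2 * m + 2)) = c2 at *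
  field_simp

/-- The summand of the Bailey pair relation for `wellPoisedAlpha`. -/
def wellPoisedTerm (p s : K) (k l : ℕ) : K :=
  wellPoisedAlpha p s k /
    (qPochhammer (p ^ 2) (p ^ 2) l * qPochhammer (s ^ 2 * p ^ 2) (p ^ 2) (2 * k + l))

/-- The Wilf–Zeilberger mate of `wellPoisedTerm`, certifying the recurrence in `m = k + l`. -/
def wellPoisedMate (p s : K) (k l : ℕ) : K :=
  -((-1) ^ k * p ^ k ^ 2 * qPochhammer (s ^ 2) (p ^ 2) k * (1 - p ^ (2 * k)) *
      (p - s * p ^ (2 * k)) * (1 - s ^ 2 * p ^ (2 * (2 * k + l))) * p ^ (2 * l)) /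
    (p * (1 + s) * qPochhammer (p ^ 2) (p ^ 2) k * qPochhammer (p ^ 2) (p ^ 2) l *
      qPochhammer (s ^ 2 * p ^ 2) (p ^ 2) (2 * k + l))

lemma wellPoisedTerm_step (hp : p ≠ 0) (hq : ∀ i : ℕ, (p ^ 2) ^ (i + 1) ≠ 1)
    (ha : ∀ i : ℕ, s ^ 2 * (p ^ 2) ^ i ≠ 1) (k l : ℕ) :
    (1 - p ^ (2 * (k + l) + 2)) * (1 - s * p ^ (2 * (k + l) + 1)) *
        (1 - s * p ^ (2 * (k + l) + 2)) * wellPoisedTerm p s k (l + 1) =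
      (1 - p ^ (2 * (k + l) + 1)) * wellPoisedTerm p s k l +
        (wellPoisedMate p s (k + 1) l - wellPoisedMate p s k (l + 1)) := by
  have hs : 1 + s ≠ 0 := by simpa using one_add_mul_pow_ne_zero ha 0
  have hQk := qPochhammer_self_ne_zero hq (k + 1)
  have hQl := qPochhammer_self_ne_zero hq (l + 1)
  have hR := qPochhammer_mul_self_ne_zero ha (2 * k + l + 1 + 1)
  rw [wellPoisedTerm, wellPoisedTerm, wellPoisedMate, wellPoisedMate, wellPoisedAlpha,
    show 2 * (k + 1) + l = 2 * k + l + 1 + 1 by ring, ← add_assoc (2 * k)]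
  simp only [qPochhammer_succ, mul_ne_zero_iff, pow_right_comm p 2, pow_mul', pow_add, add_sq,
    mul_one, one_pow, pow_one] at hQk hQl hR ⊢
  obtain ⟨hQk, hQk'⟩ := hQk
  obtain ⟨hQl, hQl'⟩ := hQl
  obtain ⟨⟨hR, hR'⟩, hR''⟩ := hR
  generalize qPochhammer (p ^ 2) (p ^ 2) k = Qk at *
  generalize qPochhammer (p ^ 2) (p ^ 2) l = Ql at *
  generalize qPochhammer (s ^ 2 * p ^ 2) (p ^ 2) (2 * k + l) = R at *
  generalize p ^ k = x at *
  generalize p ^ l = y at *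
  generalize hc₁ : 1 - p ^ 2 * x ^ 2 = c₁ at *
  generalize hc₂ : 1 - p ^ 2 * y ^ 2 = c₂ at *
  generalize hc₃ : 1 - s ^ 2 * p ^ 2 * (x ^ 2 * y) ^ 2 = c₃ at *
  generalize hc₄ : 1 - s ^ 2 * p ^ 2 * (x ^ 2 * y * p) ^ 2 = c₄ at *
  field_simp
  subst hc₁ hc₂ hc₃ hc₄
  ring

lemma wellPoisedTerm_top (hp : p ≠ 0) (hq : ∀ i : ℕ, (p ^ 2) ^ (i + 1) ≠ 1)
    (ha : ∀ i : ℕ, s ^ 2 * (p ^ 2) ^ i ≠ 1) (m : ℕ) :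
    (1 - p ^ (2 * m + 2)) * (1 - s * p ^ (2 * m + 1)) * (1 - s * p ^ (2 * m + 2)) *
        wellPoisedTerm p s (m + 1) 0 = -wellPoisedMate p s (m + 1) 0 := by
  have hs : 1 + s ≠ 0 := by simpa using one_add_mul_pow_ne_zero ha 0
  have hQ := qPochhammer_self_ne_zero hq (m + 1)
  have hR := qPochhammer_mul_self_ne_zero ha (2 * (m + 1))
  rw [wellPoisedTerm, wellPoisedMate, wellPoisedAlpha, qPochhammer_zero, add_zero]
  field_simp
  ring

lemma isBaileyPair_wellPoised (hp : p ≠ 0) (hq : ∀ i : ℕ, (p ^ 2) ^ (i + 1) ≠ 1)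
    (ha : ∀ i : ℕ, s ^ 2 * (p ^ 2) ^ i ≠ 1) :
    IsBaileyPair (s ^ 2) (p ^ 2) (wellPoisedAlpha p s) (wellPoisedBeta p s) := by
  have hs : 1 + s ≠ 0 := by simpa using one_add_mul_pow_ne_zero ha 0
  intro m
  induction m with
  | zero => simp [wellPoisedBeta, wellPoisedAlpha, hs]
  | succ m ih =>
    have hp1 : 1 - p ^ (2 * m + 2) ≠ 0 := sub_ne_zero.mpr (by
      rw [← mul_add_one, pow_mul]; exact (hq m).symm)
    refine mul_left_cancel₀ (mul_ne_zero (mul_ne_zero hp1 (one_sub_mul_pow_ne_zero ha (2 * m + 1)))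
      (one_sub_mul_pow_ne_zero ha (2 * m + 2))) ?_
    rw [wellPoisedBeta_succ hq ha, ih, mul_sum, mul_sum]
    refine (sum_antidiagonal_succ_of_telescope (G := wellPoisedMate p s)
      (f := fun k l => (1 - p ^ (2 * m + 2)) * (1 - s * p ^ (2 * m + 1)) *
        (1 - s * p ^ (2 * m + 2)) * wellPoisedTerm p s k l)
      (g := fun k l => (1 - p ^ (2 * m + 1)) * wellPoisedTerm p s k l) m
      (by simp [wellPoisedMate]) (wellPoisedTerm_top hp hq ha m) ?_).symm
    rintro k l rfl
    exact wellPoisedTerm_step hp hq ha k l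

end WellPoised

end Field

section CommRing

variable {R : Type*} [CommRing R]

/-- The summand `α_k (q/a)^k (a t, a t⁻¹; q)_k / (q t, q t⁻¹; q)_k` of Bailey's lemma for the
sequence `α` of `wellPoisedAlpha`, multiplied by `(1 + s) (q; q)_{k+l} (q t, q t⁻¹; q)_{k+l}` in
order to clear denominators; here `q = p²`, `a = s²`, `y = t + t⁻¹` and `s'` stands for `s⁻¹`. -/
def wellPoisedSummand (p s s' y : R) (k l : ℕ) : R :=
  (-1) ^ k * p ^ k ^ 2 * (1 + s * p ^ (2 * k)) * (p * s') ^ (2 * k) *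
    (qPochhammer (s ^ 2) (p ^ 2) k * qPochhammerPair (s ^ 2) y (p ^ 2) k) *
    (qPochhammer ((p ^ 2) ^ (k + 1)) (p ^ 2) l * qPochhammerPair ((p ^ 2) ^ (k + 1)) y (p ^ 2) l)

lemma map_wellPoisedSummand {S : Type*} [CommRing S] (f : R →+* S) (p s s' y : R) (k l : ℕ) :
    f (wellPoisedSummand p s s' y k l) = wellPoisedSummand (f p) (f s) (f s') (f y) k l := by
  simp only [wellPoisedSummand, map_mul, map_pow, map_neg, map_one, map_add, map_qPochhammer,
    map_qPochhammerPair]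

lemma sq_pow_choose_two_mul_pow (p : R) (k : ℕ) : (p ^ 2) ^ k.choose 2 * p ^ k = p ^ k ^ 2 := by
  induction k with
  | zero => simp
  | succ k ih =>
    rw [Nat.choose_succ_succ' k 1, Nat.choose_one_right, add_sq, pow_add (p ^ 2),
      pow_add p (k ^ 2 + 2 * k * 1), pow_add p (k ^ 2), ← ih]
    ring

lemma wellPoisedSummand_mul_pow {p s s' : R} {k l : ℕ} (hp : IsUnit p) (hs : s * s' = 1)
    (h : s * p ^ (k + l) = -1) (y : R) :
    wellPoisedSummand p s s' y k l * p ^ (4 * (k * l) + (k + l)) = (p ^ l - p ^ k) *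
      (qPochhammer ((p ^ 2) ^ (l + 1)) (p ^ 2) k * qPochhammerPair ((p ^ 2) ^ (l + 1)) y (p ^ 2) k *
        (qPochhammer ((p ^ 2) ^ (k + 1)) (p ^ 2) l *
          qPochhammerPair ((p ^ 2) ^ (k + 1)) y (p ^ 2) l)) := by
  have hrev : s ^ 2 * (p ^ 2) ^ (l + 1) * (p ^ 2) ^ k = p ^ 2 :=
    calc _ = (s * p ^ (k + l)) ^ 2 * p ^ 2 := by ring
      _ = p ^ 2 := by rw [h]; ring
  have hpow : p ^ k ^ 2 * (p * s') ^ (2 * k) * (s ^ 2) ^ k * ((s ^ 2) ^ k) ^ 2 *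
      ((p ^ 2) ^ k.choose 2) ^ 3 * p ^ (4 * (k * l) + k) = 1 :=
    calc _ = p ^ k ^ 2 * ((p ^ 2) ^ k.choose 2 * p ^ k) ^ 3 * p ^ (4 * (k * l)) *
          (s * s') ^ (2 * k) * s ^ (4 * k) := by ring
      _ = (s * p ^ (k + l)) ^ (4 * k) := by rw [sq_pow_choose_two_mul_pow, hs]; ring
      _ = 1 := by rw [h, pow_mul]; norm_num
  have hfactor : (1 + s * p ^ (2 * k)) * p ^ l = p ^ l - p ^ k := by
    linear_combination p ^ k * h
  have hsign : ((-1 : R) ^ k) ^ 2 = 1 := by rw [← pow_mul, mul_comm, pow_mul]; norm_num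
  rw [wellPoisedSummand, qPochhammer_reverse (hp.pow 2) hrev,
    qPochhammerPair_reverse (hp.pow 2) hrev, ← hfactor, neg_pow (s ^ 2)]
  generalize (-1 : R) ^ k = e at *
  linear_combination (p ^ l * (1 + s * p ^ (2 * k)) *
    (qPochhammer ((p ^ 2) ^ (l + 1)) (p ^ 2) k * qPochhammerPair ((p ^ 2) ^ (l + 1)) y (p ^ 2) k) *
    (qPochhammer ((p ^ 2) ^ (k + 1)) (p ^ 2) l *
      qPochhammerPair ((p ^ 2) ^ (k + 1)) y (p ^ 2) l)) * (e ^ 2 * hpow + hsign)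

lemma wellPoisedSummand_add_swap {p s s' : R} {k l : ℕ} (hp : IsUnit p) (hs : s * s' = 1)
    (h : s * p ^ (k + l) = -1) (y : R) :
    wellPoisedSummand p s s' y k l + wellPoisedSummand p s s' y l k = 0 := by
  have hkl := wellPoisedSummand_mul_pow hp hs h y
  have hlk := wellPoisedSummand_mul_pow (k := l) (l := k) hp hs (by rw [add_comm, h]) y
  rw [mul_comm l, add_comm l] at hlk
  refine (hp.pow (4 * (k * l) + (k + l))).mul_right_cancel ?_
  linear_combination hkl + hlk

lemma sum_wellPoisedSummand_eq_zero {p s s' : R} {N : ℕ} (hp : IsUnit p) (hs : s * s' = 1)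
    (h : s * p ^ N = -1) (y : R) :
    ∑ kl ∈ antidiagonal N, wellPoisedSummand p s s' y kl.1 kl.2 = 0 := by
  refine sum_involution (fun kl _ => kl.swap) (fun kl hkl => ?_) (fun kl hkl hne heq => hne ?_)
    (fun kl hkl => HasAntidiagonal.swap_mem_antidiagonal.mpr hkl) (fun kl _ => kl.swap_swap)
  · exact wellPoisedSummand_add_swap hp hs (by rw [HasAntidiagonal.mem_antidiagonal.mp hkl, h]) y
  · obtain ⟨k, l⟩ := kl
    obtain rfl : l = k := congrArg Prod.fst heq
    refine (hp.pow (4 * (l * l) + (l + l))).mul_right_cancel ?_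
    rw [wellPoisedSummand_mul_pow hp hs (by rw [HasAntidiagonal.mem_antidiagonal.mp hkl, h]) y,
      sub_self, zero_mul, zero_mul]

-- Modulo `1 + s p ^ N` one is in the case `s p ^ N = -1`.
lemma one_add_mul_pow_dvd_sum_wellPoisedSummand {p s s' : R} (hp : IsUnit p) (hs : s * s' = 1)
    (y : R) (N : ℕ) :
    1 + s * p ^ N ∣ ∑ kl ∈ antidiagonal N, wellPoisedSummand p s s' y kl.1 kl.2 := by
  set π := Ideal.Quotient.mk (Ideal.span {1 + s * p ^ N})
  have hπ : π s * π p ^ N = -1 := by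
    have hzero : π (1 + s * p ^ N) = 0 :=
      Ideal.Quotient.eq_zero_iff_mem.mpr (Ideal.mem_span_singleton_self _)
    rw [map_add, map_one, map_mul, map_pow] at hzero
    linear_combination hzero
  rw [← Ideal.mem_span_singleton, ← Ideal.Quotient.eq_zero_iff_mem, map_sum]
  simp only [map_wellPoisedSummand]
  exact sum_wellPoisedSummand_eq_zero (hp.map π) (by rw [← map_mul, hs, map_one]) hπ (π y)

lemma exists_eval_mul_eq_sum_wellPoisedSummand (p s : Rˣ) (N : ℕ) :
    ∃ B : R[X], ∀ y : R, (1 + s * p ^ N) * B.eval y =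
      ∑ kl ∈ antidiagonal N, wellPoisedSummand (p : R) s ↑s⁻¹ y kl.1 kl.2 := by
  obtain ⟨B, hB⟩ := one_add_mul_pow_dvd_sum_wellPoisedSummand (p := C (p : R)) (s := C (s : R))
    (s' := C ((s⁻¹ : Rˣ) : R)) (p.isUnit.map C) (by rw [← map_mul, Units.mul_inv, map_one]) X N
  refine ⟨B, fun y => ?_⟩
  have heval := congrArg (evalRingHom y) hB
  simp only [map_sum, map_wellPoisedSummand, map_mul, map_add, map_one, map_pow, coe_evalRingHom,
    eval_C, eval_X] at heval
  exact heval.symm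

lemma eval_qPochhammerPair_X (x q y : R) (k : ℕ) :
    (qPochhammerPair (C x) X (C q) k).eval y = qPochhammerPair x y q k := by
  rw [← coe_evalRingHom, map_qPochhammerPair, coe_evalRingHom, eval_C, eval_X, eval_C]

end CommRing

section Field

variable {K : Type*} [Field K]

lemma wellPoisedSummand_eq_mul {p s : K} {k l : ℕ} (hs : 1 + s ≠ 0)
    (hq : ∀ i : ℕ, (p ^ 2) ^ (i + 1) ≠ 1) (y : K) :
    wellPoisedSummand p s s⁻¹ y k l = (1 + s) * qPochhammer (p ^ 2) (p ^ 2) (k + l) *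
      (wellPoisedAlpha p s k * ((p ^ 2 / s ^ 2) ^ k * (qPochhammerPair (s ^ 2) y (p ^ 2) k *
        qPochhammerPair ((p ^ 2) ^ (k + 1)) y (p ^ 2) l))) := by
  have hQ := qPochhammer_self_ne_zero hq k
  rw [wellPoisedSummand, wellPoisedAlpha, qPochhammer_add, ← pow_succ',
    show (p * s⁻¹) ^ (2 * k) = (p ^ 2 / s ^ 2) ^ k by rw [pow_mul, ← div_eq_mul_inv, div_pow]]
  generalize qPochhammer (p ^ 2) (p ^ 2) k = Q at *
  generalize qPochhammer ((p ^ 2) ^ (k + 1)) (p ^ 2) l = Q'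
  generalize qPochhammerPair ((p ^ 2) ^ (k + 1)) y (p ^ 2) l = Y
  generalize (p ^ 2 / s ^ 2) ^ k = z
  field_simp

/-- The difference of the two sides of Bailey's lemma for the pair `wellPoisedAlpha`,
`wellPoisedBeta` with free parameters `t` and `t⁻¹`, as a polynomial in `y = t + t⁻¹`: the
denominators `(1 + s) (q; q)_N (q t, q t⁻¹; q)_N` are cleared. It vanishes when `t` is `a q ^ N`,
for which the series terminate. -/
def wellPoisedDefect (p s y : K) (N : ℕ) : K :=
  ∑ kl ∈ antidiagonal N, wellPoisedSummand p s s⁻¹ y kl.1 kl.2 -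
    (1 + s) * qPochhammer (p ^ 2) (p ^ 2) N *
      ((1 - s ^ 2 * (p ^ 2) ^ N) / (1 - s ^ 2) * ((-s ^ 2) ^ N * (p ^ 2) ^ N.choose 2) *
        (qPochhammerPair (p ^ 2) y (p ^ 2) N * ∑ m ∈ range (N + 1), wellPoisedBeta p s m *
          ((p ^ 2 / s ^ 2) ^ m * qPochhammerPair (s ^ 2) y (p ^ 2) m)))

lemma sum_wellPoisedSummand_eq_mul {p s : K} (hs : 1 + s ≠ 0)
    (hq : ∀ i : ℕ, (p ^ 2) ^ (i + 1) ≠ 1) (y : K) (N : ℕ) :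
    ∑ kl ∈ antidiagonal N, wellPoisedSummand p s s⁻¹ y kl.1 kl.2 =
      (1 + s) * qPochhammer (p ^ 2) (p ^ 2) N * ∑ kl ∈ antidiagonal N, wellPoisedAlpha p s kl.1 *
        ((p ^ 2 / s ^ 2) ^ kl.1 * (qPochhammerPair (s ^ 2) y (p ^ 2) kl.1 *
          qPochhammerPair ((p ^ 2) ^ (kl.1 + 1)) y (p ^ 2) kl.2)) := by
  rw [mul_sum]
  exact sum_congr rfl fun kl hkl => by
    rw [wellPoisedSummand_eq_mul hs hq, HasAntidiagonal.mem_antidiagonal.mp hkl]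

lemma wellPoisedDefect_eq_zero {p s v : K} (hp : p ≠ 0) (hs0 : s ≠ 0)
    (hq : ∀ i : ℕ, (p ^ 2) ^ (i + 1) ≠ 1) (ha : ∀ i : ℕ, s ^ 2 * (p ^ 2) ^ i ≠ 1) {N : ℕ}
    (hv : s ^ 2 * (p ^ 2) ^ N * v = 1) :
    wellPoisedDefect p s (s ^ 2 * (p ^ 2) ^ N + v) N = 0 := by
  have hs : 1 + s ≠ 0 := by simpa using one_add_mul_pow_ne_zero ha 0
  rw [wellPoisedDefect, sum_wellPoisedSummand_eq_mul hs hq,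
    (isBaileyPair_wellPoised hp hq ha).sum_pair_eq (pow_ne_zero 2 hp) (pow_ne_zero 2 hs0) hq ha hv,
    Nat.sum_antidiagonal_eq_sum_range_succ_mk, sub_self]

/-- The difference of the two sides of Bailey's lemma for the pair `wellPoisedAlpha`,
`wellPoisedBeta` in which both free parameters are set to `1`; it measures how far the truncated
series are from satisfying the identity. -/
def wellPoisedDifference (p s : K) (N : ℕ) : K :=
  ∑ k ∈ range (N + 1), wellPoisedAlpha p s k * ((p ^ 2 / s ^ 2) ^ k *
      (qPochhammer (s ^ 2) (p ^ 2) k / qPochhammer (p ^ 2) (p ^ 2) k) ^ 2) -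
    (1 - s ^ 2 * (p ^ 2) ^ N) / (1 - s ^ 2) * ((-s ^ 2) ^ N * (p ^ 2) ^ N.choose 2) *
      ∑ k ∈ range (N + 1), wellPoisedBeta p s k *
        ((p ^ 2 / s ^ 2) ^ k * qPochhammer (s ^ 2) (p ^ 2) k ^ 2)

lemma wellPoisedDifference_zero {p s : K} (hs : 1 - s ^ 2 ≠ 0) :
    wellPoisedDifference p s 0 = 0 := by
  have hs1 : 1 + s ≠ 0 := fun h => hs (by linear_combination (1 - s) * h)
  simp [wellPoisedDifference, wellPoisedAlpha, wellPoisedBeta, qPochhammer_zero, div_self hs,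
    div_self hs1]

lemma wellPoisedDefect_two {p s : K} (hs : 1 + s ≠ 0)
    (hq : ∀ i : ℕ, (p ^ 2) ^ (i + 1) ≠ 1) (N : ℕ) :
    wellPoisedDefect p s 2 N =
      (1 + s) * qPochhammer (p ^ 2) (p ^ 2) N ^ 3 * wellPoisedDifference p s N := by
  have hsummand : ∀ kl ∈ antidiagonal N, wellPoisedAlpha p s kl.1 * ((p ^ 2 / s ^ 2) ^ kl.1 *
      (qPochhammer (s ^ 2) (p ^ 2) kl.1 ^ 2 *
        qPochhammer ((p ^ 2) ^ (kl.1 + 1)) (p ^ 2) kl.2 ^ 2)) =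
      qPochhammer (p ^ 2) (p ^ 2) N ^ 2 * (wellPoisedAlpha p s kl.1 * ((p ^ 2 / s ^ 2) ^ kl.1 *
        (qPochhammer (s ^ 2) (p ^ 2) kl.1 / qPochhammer (p ^ 2) (p ^ 2) kl.1) ^ 2)) := by
    intro kl hkl
    have hQ := qPochhammer_self_ne_zero hq kl.1
    rw [← HasAntidiagonal.mem_antidiagonal.mp hkl, qPochhammer_add, ← pow_succ', div_pow]
    generalize qPochhammer (p ^ 2) (p ^ 2) kl.1 = Q at *
    generalize qPochhammer ((p ^ 2) ^ (kl.1 + 1)) (p ^ 2) kl.2 = Q'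
    field_simp
  simp only [wellPoisedDefect, wellPoisedDifference, sum_wellPoisedSummand_eq_mul hs hq,
    qPochhammerPair_two]
  rw [sum_congr rfl hsummand, ← mul_sum, Nat.sum_antidiagonal_eq_sum_range_succ_mk]
  ring

end Field

section Integral

variable {O K : Type*} [CommRing O] [Field K]

lemma isUnit_qPochhammer {x q : O} {k : ℕ} (h : ∀ j < k, IsUnit (1 - x * q ^ j)) :
    IsUnit (qPochhammer x q k) :=
  IsUnit.prod_iff.mpr fun j hj => h j (mem_range.mp hj)

lemma qPochhammer_dvd {x q : O} {i k : ℕ} (h : ∀ j < k, j ≠ i → IsUnit (1 - x * q ^ j)) :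
    qPochhammer x q k ∣ 1 - x * q ^ i := by
  by_cases hi : i ∈ range k
  · rw [qPochhammer, ← mul_prod_erase _ _ hi]
    refine (IsUnit.mul_right_dvd (IsUnit.prod_iff.mpr fun j hj => ?_)).mpr dvd_rfl
    exact h j (mem_range.mp (mem_of_mem_erase hj)) (ne_of_mem_erase hj)
  · exact (isUnit_qPochhammer fun j hj => h j hj fun hji => hi (mem_range.mpr (hji ▸ hj))).dvd

lemma exists_map_eq_mul_wellPoisedBeta (ι : O →+* K) {p s : O} {m N : ℕ}
    (ha : ∀ i : ℕ, ι s ^ 2 * (ι p ^ 2) ^ i ≠ 1)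
    (hq : ∀ j < m, IsUnit (1 - p ^ 2 * (p ^ 2) ^ j))
    (hsp : ∀ i < 2 * m + 1, i ≠ N → IsUnit (1 - s * p ^ i)) :
    ∃ γ : O, ι γ = (1 - ι s * ι p ^ N) / (1 - ι s) * wellPoisedBeta (ι p) (ι s) m := by
  obtain ⟨u, hu⟩ := isUnit_qPochhammer hq
  obtain ⟨g, hg⟩ := qPochhammer_dvd hsp
  have hs : 1 - ι s ≠ 0 := by simpa using one_sub_mul_pow_ne_zero ha 0
  have hS : qPochhammer (ι s * ι p) (ι p) (2 * m) ≠ 0 := qPochhammer_mul_self_ne_zero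
    (fun j => (sub_ne_zero.mp (one_sub_mul_pow_ne_zero ha j)).symm) _
  have hw : 1 - ι s * ι p ^ N = (1 - ι s) * qPochhammer (ι s * ι p) (ι p) (2 * m) * ι g := by
    rw [← qPochhammer_succ', ← map_qPochhammer, ← map_mul, ← hg, map_sub, map_one, map_mul, map_pow]
  have hQ : qPochhammer (ι p ^ 2) (ι p ^ 2) m * ι ↑u⁻¹ = 1 := by
    rw [← map_pow, ← map_qPochhammer, ← hu, ← map_mul, Units.mul_inv, map_one]
  refine ⟨qPochhammer p (p ^ 2) m * ↑u⁻¹ * g, ?_⟩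
  have hQ0 := left_ne_zero_of_mul_eq_one hQ
  rw [hw, wellPoisedBeta, map_mul, map_mul, map_qPochhammer, map_pow, eq_inv_of_mul_eq_one_right hQ]
  generalize qPochhammer (ι s * ι p) (ι p) (2 * m) = S at *
  field_simp

lemma exists_eval_eq_sum_wellPoisedBeta (ι : O →+* K) (p s : Oˣ) (N : ℕ)
    (ha : ∀ i : ℕ, ι s ^ 2 * (ι p ^ 2) ^ i ≠ 1)
    (hq : ∀ j < N, IsUnit (1 - (p : O) ^ 2 * (p ^ 2) ^ j))
    (hsp : ∀ i < 2 * N + 1, i ≠ N → IsUnit (1 - (s : O) * p ^ i)) :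
    ∃ T : O[X], ∀ y : O, ι (T.eval y) = (1 - ι s * ι p ^ N) / (1 - ι s) *
      ∑ m ∈ range (N + 1), wellPoisedBeta (ι p) (ι s) m *
        ((ι p ^ 2 / ι s ^ 2) ^ m * qPochhammerPair (ι s ^ 2) (ι y) (ι p ^ 2) m) := by
  have hβ (m : ℕ) : ∃ γ : O, m ∈ range (N + 1) →
      ι γ = (1 - ι s * ι p ^ N) / (1 - ι s) * wellPoisedBeta (ι p) (ι s) m := by
    by_cases hm : m < N + 1
    · obtain ⟨γ, hγ⟩ := exists_map_eq_mul_wellPoisedBeta (m := m) ι ha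
        (fun j hj => hq j (by omega))
        (fun i hi => hsp i (by omega))
      exact ⟨γ, fun _ => hγ⟩
    · exact ⟨0, fun h => absurd (mem_range.mp h) hm⟩
  choose γ hγ using hβ
  refine ⟨∑ m ∈ range (N + 1), C (γ m) * (C ((p ^ 2 * ↑(s ^ 2)⁻¹) ^ m : O) *
    qPochhammerPair (C (s ^ 2 : O)) X (C (p ^ 2 : O)) m), fun y => ?_⟩
  rw [eval_finsetSum, map_sum, mul_sum]
  refine sum_congr rfl fun m hm => ?_
  rw [eval_mul, eval_mul, eval_C, eval_C, eval_qPochhammerPair_X, map_mul, map_mul, hγ m hm,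
    map_pow, map_mul, map_units_inv, map_qPochhammerPair, ← div_eq_mul_inv,
    Units.val_pow_eq_pow_val, map_pow, map_pow]
  ring

lemma exists_eval_eq_wellPoisedDefect (ι : O →+* K) (p s : Oˣ) (N : ℕ)
    (ha : ∀ i : ℕ, ι s ^ 2 * (ι p ^ 2) ^ i ≠ 1)
    (hq : ∀ j < N, IsUnit (1 - (p : O) ^ 2 * (p ^ 2) ^ j))
    (hsp : ∀ i < 2 * N + 1, i ≠ N → IsUnit (1 - (s : O) * p ^ i)) :
    ∃ D : O[X], ∀ y : O,
      ι ((1 + s * p ^ N) * D.eval y) = wellPoisedDefect (ι p) (ι s) (ι y) N := by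
  obtain ⟨B, hB⟩ := exists_eval_mul_eq_sum_wellPoisedSummand p s N
  obtain ⟨T, hT⟩ := exists_eval_eq_sum_wellPoisedBeta ι p s N ha hq hsp
  refine ⟨B - C (qPochhammer (p ^ 2 : O) (p ^ 2) N * ((-s ^ 2) ^ N * (p ^ 2) ^ N.choose 2)) *
    (qPochhammerPair (C (p ^ 2 : O)) X (C (p ^ 2 : O)) N * T), fun y => ?_⟩
  have hs1 : 1 - ι s ≠ 0 := by simpa using one_sub_mul_pow_ne_zero ha 0
  have hs2 : 1 + ι s ≠ 0 := by simpa using one_add_mul_pow_ne_zero ha 0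
  have hfactor : (1 - ι s ^ 2 * (ι p ^ 2) ^ N) / (1 - ι s ^ 2) * (1 + ι s) =
      (1 + ι s * ι p ^ N) * ((1 - ι s * ι p ^ N) / (1 - ι s)) := by
    rw [show 1 - ι s ^ 2 = (1 - ι s) * (1 + ι s) by ring]
    field_simp
    ring
  rw [wellPoisedDefect, eval_sub, eval_mul, eval_mul, eval_C, eval_qPochhammerPair_X, mul_sub,
    map_sub, hB, map_sum]
  simp only [map_wellPoisedSummand, map_mul, map_add, map_one, map_pow,
    map_neg, map_qPochhammer, map_qPochhammerPair, hT, map_units_inv]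
  linear_combination qPochhammer (ι p ^ 2) (ι p ^ 2) N *
    ((-ι s ^ 2) ^ N * (ι p ^ 2) ^ N.choose 2) * qPochhammerPair (ι p ^ 2) (ι y) (ι p ^ 2) N *
    (∑ m ∈ range (N + 1), wellPoisedBeta (ι p) (ι s) m *
        ((ι p ^ 2 / ι s ^ 2) ^ m * qPochhammerPair (ι s ^ 2) (ι y) (ι p ^ 2) m)) * hfactor

lemma exists_wellPoisedDefect_two_eq (ι : O →+* K) (p s : Oˣ) (N : ℕ)
    (hq : ∀ i : ℕ, (ι p ^ 2) ^ (i + 1) ≠ 1) (ha : ∀ i : ℕ, ι s ^ 2 * (ι p ^ 2) ^ i ≠ 1)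
    (hqU : ∀ j < N, IsUnit (1 - (p : O) ^ 2 * (p ^ 2) ^ j))
    (hspU : ∀ i < 2 * N + 1, i ≠ N → IsUnit (1 - (s : O) * p ^ i)) :
    ∃ ρ : O, wellPoisedDefect (ι p) (ι s) 2 N =
      ι ((1 + s * p ^ N) * (1 - (s * p ^ N) ^ 2) ^ 2 * ρ) := by
  obtain ⟨D, hD⟩ := exists_eval_eq_wellPoisedDefect ι p s N ha hqU hspU
  obtain ⟨w, hw⟩ : IsUnit ((s : O) * p ^ N) := s.isUnit.mul (p.isUnit.pow N)
  simp only [← hw] at hD ⊢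
  have hinv : (w : O) * ↑w⁻¹ = 1 := w.mul_inv
  obtain ⟨ρ, hρ⟩ := sub_dvd_eval_sub (2 : O) ((w : O) ^ 2 + (↑w⁻¹ : O) ^ 2) D
  have hzero : ι ((1 + w) * D.eval ((w : O) ^ 2 + (↑w⁻¹ : O) ^ 2)) = 0 := by
    have hι : ι ((w : O) ^ 2) = ι s ^ 2 * (ι p ^ 2) ^ N := by
      rw [hw, map_pow, map_mul, map_pow]; ring
    rw [hD, map_add, hι]
    refine wellPoisedDefect_eq_zero (p.isUnit.map ι).ne_zero (s.isUnit.map ι).ne_zero hq ha ?_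
    rw [← hι, ← map_mul, ← mul_pow, hinv, one_pow, map_one]
  refine ⟨-(↑w⁻¹ : O) ^ 2 * ρ, ?_⟩
  rw [← map_ofNat ι 2, ← hD, ← sub_zero (ι _), ← hzero, ← map_sub]
  congr 1
  linear_combination (1 + (w : O)) * hρ -
    ρ * (1 + (w : O)) * (2 - (w : O) ^ 2) * (1 + w * ↑w⁻¹) * hinv

lemma exists_wellPoisedDifference_eq (ι : O →+* K) (p s : Oˣ) (N : ℕ)
    (hq : ∀ i : ℕ, (ι p ^ 2) ^ (i + 1) ≠ 1) (ha : ∀ i : ℕ, ι s ^ 2 * (ι p ^ 2) ^ i ≠ 1)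
    (hsU : IsUnit (1 + (s : O))) (hqU : ∀ j < N, IsUnit (1 - (p : O) ^ 2 * (p ^ 2) ^ j))
    (hspU : ∀ i < 2 * N + 1, i ≠ N → IsUnit (1 - (s : O) * p ^ i)) :
    ∃ ρ : O, wellPoisedDifference (ι p) (ι s) N =
      ι ((1 + s * p ^ N) * (1 - (s * p ^ N) ^ 2) ^ 2 * ρ) := by
  obtain ⟨ρ, hρ⟩ := exists_wellPoisedDefect_two_eq ι p s N hq ha hqU hspU
  obtain ⟨v, hv⟩ := hsU.mul ((isUnit_qPochhammer hqU).pow 3)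
  have hs : 1 + ι s ≠ 0 := by simpa using one_add_mul_pow_ne_zero ha 0
  have hι : (1 + ι s) * qPochhammer (ι p ^ 2) (ι p ^ 2) N ^ 3 = ι v := by
    rw [hv, map_mul, map_add, map_one, map_pow, map_qPochhammer, map_pow]
  refine ⟨↑v⁻¹ * ρ, mul_left_cancel₀ (v.isUnit.map ι).ne_zero ?_⟩
  rw [← map_mul, ← hι, ← wellPoisedDefect_two hs hq, hρ]
  congr 1
  rw [mul_left_comm _ (↑v⁻¹ : O) ρ, v.mul_inv_cancel_left]

end Integral

section Localization

variable {R : Type*} [CommRing R]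

/-- The elements of `R` coprime to `m`. Localizing at them makes every element coprime to `m`
invertible while keeping divisibility by powers of `m` meaningful. -/
def coprimeSubmonoid (m : R) : Submonoid R where
  carrier := {f | IsCoprime f m}
  one_mem' := isCoprime_one_left
  mul_mem' := IsCoprime.mul_left

lemma coprimeSubmonoid_le_nonZeroDivisors [IsDomain R] {m : R} (hm : ¬ IsUnit m) :
    coprimeSubmonoid m ≤ nonZeroDivisors R := fun f hf =>
  mem_nonZeroDivisors_of_ne_zero fun h0 =>
    hm (isCoprime_zero_left.mp (h0 ▸ (hf : IsCoprime f m)))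

lemma dvd_num_of_eq_algebraMap_mul {F O : Type*} [Field F] [CommRing O] [Algebra F[X] O]
    [Algebra O (RatFunc F)] [IsScalarTower F[X] O (RatFunc F)] {m A : F[X]} {j : ℕ}
    [IsLocalization (coprimeSubmonoid m) O] (hA : A ∣ m ^ j) {f : RatFunc F} {a : O}
    (hf : f = algebraMap O (RatFunc F) (algebraMap F[X] O A * a)) : A ∣ f.num := by
  obtain ⟨⟨g, h, hh⟩, hgh⟩ := IsLocalization.surj (coprimeSubmonoid m) a
  have hcoprime : IsCoprime A h :=
    ((show IsCoprime h m from hh).pow_right.of_isCoprime_of_dvd_right hA).symm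
  have hcross : f.num * h = A * (g * f.denom) := by
    apply RatFunc.algebraMap_injective F
    have hnum : algebraMap F[X] (RatFunc F) f.num = f * algebraMap F[X] (RatFunc F) f.denom :=
      (div_eq_iff (RatFunc.algebraMap_ne_zero f.denom_ne_zero)).mp (RatFunc.num_div_denom f)
    have hg := congrArg (algebraMap O (RatFunc F)) hgh
    rw [map_mul, ← IsScalarTower.algebraMap_apply, ← IsScalarTower.algebraMap_apply] at hg
    rw [map_mul, ← IsScalarTower.algebraMap_apply] at hf
    rw [map_mul, map_mul, map_mul, hnum, ← hg]
    linear_combination algebraMap F[X] (RatFunc F) f.denom * algebraMap F[X] (RatFunc F) h * hf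
  exact hcoprime.dvd_of_dvd_mul_right (hcross ▸ dvd_mul_right A _)

end Localization

section Cyclotomic

lemma isCoprime_one_sub_X_pow_cyclotomic {n a : ℕ} (h : ¬ n ∣ a) :
    IsCoprime (1 - X ^ a : ℚ[X]) (cyclotomic n ℚ) := by
  have ha : 0 < a := Nat.pos_of_ne_zero fun h0 => h (h0 ▸ dvd_zero n)
  rw [← neg_sub, IsCoprime.neg_left_iff, ← prod_cyclotomic_eq_X_pow_sub_one ha]
  exact IsCoprime.prod_left fun e he => cyclotomic.isCoprime_rat fun hen =>
    h (hen ▸ Nat.dvd_of_mem_divisors he)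

lemma isCoprime_one_sub_X_pow_expand_cyclotomic {n a : ℕ} (h : ¬ n ∣ a) :
    IsCoprime (1 - X ^ (2 * a) : ℚ[X]) (expand ℚ 2 (cyclotomic n ℚ)) := by
  simpa [pow_mul] using (isCoprime_one_sub_X_pow_cyclotomic h).map (expand ℚ 2 : ℚ[X] →+* ℚ[X])

variable (R : Type*) [CommRing R] {n : ℕ}

lemma isCoprime_X_expand_cyclotomic (hn : 0 < n) :
    IsCoprime (X : R[X]) (expand R 2 (cyclotomic n R)) := by
  have hX : IsCoprime (X : R[X]) (X ^ n - 1) :=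
    ⟨X ^ (n - 1), -1, by rw [← pow_succ, Nat.sub_add_cancel hn]; ring⟩
  have hexpand := (hX.of_isCoprime_of_dvd_right (cyclotomic.dvd_X_pow_sub_one n R)).map
    (expand R 2 : R[X] →+* R[X])
  exact hexpand.of_isCoprime_of_dvd_left (by simp)

lemma not_isUnit_expand_cyclotomic [IsDomain R] (hn : 0 < n) :
    ¬ IsUnit (expand R 2 (cyclotomic n R)) := by
  refine not_isUnit_of_natDegree_pos _ ?_
  rw [natDegree_expand, natDegree_cyclotomic]
  exact Nat.mul_pos (Nat.totient_pos.mpr hn) two_pos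

lemma cyclotomic_dvd_expand (hodd : Odd n) :
    cyclotomic n R ∣ expand R 2 (cyclotomic n R) := by
  rw [cyclotomic_expand_eq_cyclotomic_mul Nat.prime_two hodd.not_two_dvd_nat]
  exact dvd_mul_left _ _

lemma comp_neg_X_cyclotomic_dvd_expand (hodd : Odd n) :
    (cyclotomic n R).comp (-X) ∣ expand R 2 (cyclotomic n R) := by
  simpa [expand_eq_comp_X_pow, comp_assoc] using
    map_dvd (compRingHom (-X : R[X])) (cyclotomic_dvd_expand R hodd)

lemma comp_neg_X_cyclotomic_dvd (hodd : Odd n) :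
    (cyclotomic n R).comp (-X) ∣ 1 + X ^ n := by
  have h := map_dvd (compRingHom (-X : R[X])) (cyclotomic.dvd_X_pow_sub_one n R)
  rw [← dvd_neg]
  simpa [hodd.neg_pow, sub_eq_add_neg, add_comm] using h

lemma cyclotomic_pow_mul_dvd (hodd : Odd n) :
    (cyclotomic n R).comp (-X) ^ 3 * cyclotomic n R ^ 2 ∣
      (1 + X ^ n) * (1 - (X ^ n) ^ 2) ^ 2 := by
  rw [show ((1 + X ^ n) * (1 - (X ^ n) ^ 2) ^ 2 : R[X]) =
    (1 + X ^ n) ^ 3 * (X ^ n - 1) ^ 2 by ring]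
  exact mul_dvd_mul (pow_dvd_pow_of_dvd (comp_neg_X_cyclotomic_dvd R hodd) 3)
    (pow_dvd_pow_of_dvd (cyclotomic.dvd_X_pow_sub_one n R) 2)

lemma cyclotomic_pow_mul_dvd_expand_pow (hodd : Odd n) :
    (cyclotomic n R).comp (-X) ^ 3 * cyclotomic n R ^ 2 ∣
      expand R 2 (cyclotomic n R) ^ 5 := by
  rw [pow_add _ 3 2]
  exact mul_dvd_mul (pow_dvd_pow_of_dvd (comp_neg_X_cyclotomic_dvd_expand R hodd) 3)
    (pow_dvd_pow_of_dvd (cyclotomic_dvd_expand R hodd) 2)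

end Cyclotomic

section Units

variable {O : Type*} [CommRing O] {n : ℕ} {u : Oˣ}

lemma isUnit_one_sub_zpow_two_mul (h : ∀ a : ℕ, ¬ n ∣ a → IsUnit (1 - (u : O) ^ (2 * a))) {t : ℤ}
    (ht : ¬ (n : ℤ) ∣ t) : IsUnit (1 - ((u ^ (2 * t) : Oˣ) : O)) := by
  obtain ⟨a, rfl | rfl⟩ := t.eq_nat_or_neg
  · exact_mod_cast h a (by exact_mod_cast ht)
  · have ha := h a (by rwa [Int.dvd_neg, Int.natCast_dvd_natCast] at ht)
    have hinv : (((u ^ (2 * a))⁻¹ : Oˣ) : O) * (u : O) ^ (2 * a) = 1 := by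
      rw [← Units.val_pow_eq_pow_val, Units.inv_mul]
    have hneg : (1 - ((u ^ (2 * -(a : ℤ)) : Oˣ) : O)) =
        (-(u ^ (2 * a))⁻¹ : Oˣ) * (1 - (u : O) ^ (2 * a)) := by
      rw [mul_neg, zpow_neg, show (2 * (a : ℤ)) = ((2 * a : ℕ) : ℤ) by push_cast; rfl,
        zpow_natCast, Units.val_neg]
      linear_combination -hinv
    exact hneg ▸ (Units.isUnit _).mul ha

lemma isUnit_one_sub_zpow (h : ∀ a : ℕ, ¬ n ∣ a → IsUnit (1 - (u : O) ^ (2 * a))) {t : ℤ}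
    (ht : ¬ (n : ℤ) ∣ t) : IsUnit (1 - ((u ^ t : Oˣ) : O)) := by
  refine isUnit_of_dvd_unit ⟨1 + ((u ^ t : Oˣ) : O), ?_⟩ (isUnit_one_sub_zpow_two_mul h ht)
  rw [two_mul, zpow_add, Units.val_mul]
  ring

lemma isUnit_one_add_zpow (h : ∀ a : ℕ, ¬ n ∣ a → IsUnit (1 - (u : O) ^ (2 * a))) {t : ℤ}
    (ht : ¬ (n : ℤ) ∣ t) : IsUnit (1 + ((u ^ t : Oˣ) : O)) := by
  refine isUnit_of_dvd_unit ⟨1 - ((u ^ t : Oˣ) : O), ?_⟩ (isUnit_one_sub_zpow_two_mul h ht)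
  rw [two_mul, zpow_add, Units.val_mul]
  ring

end Units

section Specialization

lemma not_dvd_mul_of_abs_lt {n d : ℕ} (hgcd : n.gcd d = 1) {t : ℤ} (ht : t ≠ 0)
    (htn : |t| < n) : ¬ (n : ℤ) ∣ d * t := fun h =>
  ht (Int.eq_zero_of_abs_lt_dvd ((Nat.isCoprime_iff_coprime.mpr hgcd).dvd_of_dvd_mul_left h) htn)

lemma sub_mul_add_mul_ne_zero {n d N : ℕ} (hd : 0 < d) (hgcd : n.gcd d = 1) (hN : N < n) (i : ℕ) :
    (n : ℤ) - d * N + d * i ≠ 0 := by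
  intro h
  have hn : (n : ℤ) = d * (N - i) := by linear_combination h
  have hlt : (0 : ℤ) < N - i :=
    pos_of_mul_pos_right (hn ▸ by omega : 0 < (d : ℤ) * (N - i)) (by omega)
  exact not_dvd_mul_of_abs_lt hgcd hlt.ne' (by rw [abs_of_pos hlt]; omega) (dvd_of_eq hn)

lemma not_dvd_sub_mul_add_mul {n d N i : ℕ} (hgcd : n.gcd d = 1) (hN : N < n)
    (hi : i < 2 * N + 1) (hiN : i ≠ N) : ¬ (n : ℤ) ∣ n - d * N + d * i := by
  rw [show (n : ℤ) - d * N + d * i = d * (i - N) + n by ring, dvd_add_self_right]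
  exact not_dvd_mul_of_abs_lt hgcd (by omega) (by rw [abs_lt]; omega)

lemma exists_eq_sub_mul {n d : ℕ} {r : ℤ} (hd : 0 < d) (hr1 : (n : ℤ) - d * n + d ≤ r)
    (hr2 : r ≤ n) (hnr : (n : ℤ) ≡ r [ZMOD d]) : ∃ N : ℕ, N < n ∧ r = n - d * N := by
  obtain ⟨t, ht⟩ := hnr.symm.dvd
  have hd' : (0 : ℤ) < d := by exact_mod_cast hd
  have ht0 : 0 ≤ t := nonneg_of_mul_nonneg_right (by linarith : 0 ≤ (d : ℤ) * t) hd'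
  have htn : t ≤ n - 1 := le_of_mul_le_mul_left (by linarith : (d : ℤ) * t ≤ d * (n - 1)) hd'
  obtain ⟨N, rfl⟩ := Int.eq_ofNat_of_zero_le ht0
  exact ⟨N, by omega, by linarith⟩

variable {O K : Type*} [CommRing O] [Field K]

lemma map_val_zpow (ι : O →+* K) (u : Oˣ) (t : ℤ) : ι ((u ^ t : Oˣ) : O) = ι u ^ t :=
  (congrArg Units.val (map_zpow (Units.map (ι : O →* K)) u t)).trans
    (Units.val_zpow_eq_zpow_val _ _)

lemma zpow_sq {G : Type*} [DivisionMonoid G] (x : G) (t : ℤ) : (x ^ t) ^ 2 = x ^ (2 * t) := by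
  rw [mul_comm, zpow_mul, zpow_ofNat]

lemma zpow_mul_zpow_pow {G : Type*} [Group G] (u : G) (a d : ℤ) (i : ℕ) :
    u ^ a * (u ^ d) ^ i = u ^ (a + d * i) := by
  rw [← zpow_natCast, ← zpow_mul, ← zpow_add]

lemma exists_wellPoisedDifference_zpow_eq (ι : O →+* K) (u : Oˣ) {n d N : ℕ} (hd : 0 < d)
    (hgcd : n.gcd d = 1) (hN : N < n) (hu : ∀ t : ℤ, t ≠ 0 → ι u ^ t ≠ 1)
    (hunit : ∀ a : ℕ, ¬ n ∣ a → IsUnit (1 - (u : O) ^ (2 * a))) :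
    ∃ ρ : O, wellPoisedDifference (ι u ^ (d : ℤ)) (ι u ^ ((n : ℤ) - d * N)) N =
      ι ((1 + u ^ n) * (1 - (u ^ n) ^ 2) ^ 2 * ρ) := by
  have hprod (a : ℤ) (i : ℕ) : ((u ^ a : Oˣ) : O) * ((u ^ (d : ℤ) : Oˣ) : O) ^ i =
      ((u ^ (a + d * i) : Oˣ) : O) := by
    rw [← zpow_mul_zpow_pow, Units.val_mul, Units.val_pow_eq_pow_val]
  have hprod2 (a : ℤ) (i : ℕ) : ((u ^ a : Oˣ) : O) ^ 2 * (((u ^ (d : ℤ) : Oˣ) : O) ^ 2) ^ i =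
      ((u ^ (2 * (a + d * i)) : Oˣ) : O) := by
    rw [← zpow_sq, Units.val_pow_eq_pow_val, ← hprod]
    ring
  have hne (a : ℤ) (i : ℕ) (h : a + d * i ≠ 0) :
      ι ((u ^ a : Oˣ) : O) ^ 2 * (ι ((u ^ (d : ℤ) : Oˣ) : O) ^ 2) ^ i ≠ 1 := by
    rw [← map_pow, ← map_pow, ← map_pow, ← map_mul, hprod2, map_val_zpow]
    exact hu _ (mul_ne_zero two_ne_zero h)
  have ha := fun i => hne _ i (sub_mul_add_mul_ne_zero hd hgcd hN i)
  rw [← map_val_zpow, ← map_val_zpow]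
  rcases eq_or_ne N 0 with rfl | hN0
  · refine ⟨0, ?_⟩
    rw [mul_zero, map_zero, wellPoisedDifference_zero fun h => ha 0 ?_]
    linear_combination -h
  obtain ⟨ρ, hρ⟩ := exists_wellPoisedDifference_eq ι (u ^ (d : ℤ)) (u ^ ((n : ℤ) - d * N)) N
    (fun i => by rw [pow_succ']; exact hne d i (by positivity)) ha
    (isUnit_one_add_zpow hunit (by
      simpa using not_dvd_sub_mul_add_mul hgcd hN (by omega) hN0.symm))
    (fun j hj => by
      rw [hprod2, ← mul_one_add (d : ℤ)]
      exact isUnit_one_sub_zpow_two_mul hunit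
        (not_dvd_mul_of_abs_lt hgcd (by positivity) (by rw [abs_lt]; omega)))
    (fun i hi hiN => by
      rw [hprod]
      exact isUnit_one_sub_zpow hunit (not_dvd_sub_mul_add_mul hgcd hN hi hiN))
  refine ⟨ρ, hρ.trans ?_⟩
  rw [hprod, sub_add_cancel, zpow_natCast, Units.val_pow_eq_pow_val]

lemma wellPoisedAlpha_zpow {x : K} (hx : x ≠ 0) (d r : ℤ) (k : ℕ) :
    wellPoisedAlpha (x ^ d) (x ^ r) k * (((x ^ d) ^ 2 / (x ^ r) ^ 2) ^ k *
      (qPochhammer ((x ^ r) ^ 2) ((x ^ d) ^ 2) k /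
        qPochhammer ((x ^ d) ^ 2) ((x ^ d) ^ 2) k) ^ 2) =
    (-1) ^ k * ((1 + x ^ (2 * d * k + r)) * qPochhammer (x ^ (2 * r)) (x ^ (2 * d)) k ^ 3) /
      ((1 + x ^ r) * qPochhammer (x ^ (2 * d)) (x ^ (2 * d)) k ^ 3) *
      x ^ (d * (k : ℤ) ^ 2 + 2 * k * (d - r)) := by
  have hexp : x ^ (d * (k : ℤ) ^ 2 + 2 * k * (d - r)) =
      (x ^ d) ^ k ^ 2 * (x ^ (2 * d) / x ^ (2 * r)) ^ k := by
    rw [← zpow_sub₀ hx, ← zpow_natCast, ← zpow_natCast, ← zpow_mul, ← zpow_mul, ← zpow_add₀ hx]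
    congr 1; push_cast; ring
  have hterm : x ^ (2 * d * k + r) = x ^ r * (x ^ d) ^ (2 * k) := by
    rw [← zpow_natCast, ← zpow_mul, ← zpow_add₀ hx]
    congr 1; push_cast; ring
  rw [wellPoisedAlpha, hexp, hterm, zpow_sq, zpow_sq, div_pow]
  simp only [div_eq_mul_inv, mul_inv]
  ring

lemma wellPoisedBeta_zpow {x : K} (hx : x ≠ 0) (d r : ℤ) (k : ℕ) :
    wellPoisedBeta (x ^ d) (x ^ r) k * (((x ^ d) ^ 2 / (x ^ r) ^ 2) ^ k *
      qPochhammer ((x ^ r) ^ 2) ((x ^ d) ^ 2) k ^ 2) =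
    qPochhammer (x ^ (2 * r)) (x ^ (2 * d)) k ^ 2 * qPochhammer (x ^ d) (x ^ (2 * d)) k /
      (qPochhammer (x ^ (2 * d)) (x ^ (2 * d)) k * qPochhammer (x ^ (d + r)) (x ^ (2 * d)) k *
        qPochhammer (x ^ (2 * d + r)) (x ^ (2 * d)) k) * x ^ (2 * k * (d - r)) := by
  have hexp : x ^ (2 * k * (d - r)) = (x ^ (2 * d) / x ^ (2 * r)) ^ k := by
    rw [← zpow_sub₀ hx, ← zpow_natCast, ← zpow_mul]
    congr 1; ring
  have hprod : qPochhammer (x ^ r * x ^ d) (x ^ d) (2 * k) =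
      qPochhammer (x ^ (d + r)) (x ^ (2 * d)) k *
        qPochhammer (x ^ (2 * d + r)) (x ^ (2 * d)) k := by
    rw [qPochhammer_two_mul, ← zpow_sq x d, zpow_add₀ hx, zpow_add₀ hx, ← zpow_sq x d]
    ring_nf
  rw [wellPoisedBeta, hprod, hexp, zpow_sq, zpow_sq]
  ring

end Specialization

section RatFunc

lemma ratFunc_X_zpow_ne_one {F : Type*} [Field F] {t : ℤ} (ht : t ≠ 0) :
    (RatFunc.X : RatFunc F) ^ t ≠ 1 := by
  have hpow (a : ℕ) (ha : a ≠ 0) : (RatFunc.X : RatFunc F) ^ a ≠ 1 := by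
    rw [← RatFunc.algebraMap_X, ← map_pow, ← map_one (algebraMap F[X] (RatFunc F)),
      (RatFunc.algebraMap_injective F).ne_iff]
    exact fun h => ha (by simpa using congrArg natDegree h)
  obtain ⟨a, rfl | rfl⟩ := t.eq_nat_or_neg
  · exact_mod_cast hpow a (by simpa using ht)
  · rw [zpow_neg, zpow_natCast, Ne, inv_eq_one]
    exact hpow a (by simpa using ht)

lemma cyclotomic_dvd_num_wellPoisedDifference {n d N : ℕ} (hpos : 0 < n) (hodd : Odd n)
    (hd : 0 < d) (hgcd : n.gcd d = 1) (hN : N < n) :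
    (cyclotomic n ℚ).comp (-X) ^ 3 * cyclotomic n ℚ ^ 2 ∣ RatFunc.num
      (wellPoisedDifference (RatFunc.X ^ (d : ℤ)) (RatFunc.X ^ ((n : ℤ) - d * N)) N) := by
  let M := coprimeSubmonoid (expand ℚ 2 (cyclotomic n ℚ))
  let O := Localization.subalgebra (RatFunc ℚ) M
    (coprimeSubmonoid_le_nonZeroDivisors (not_isUnit_expand_cyclotomic ℚ hpos))
  obtain ⟨u, hu⟩ := IsLocalization.map_units O (⟨X, isCoprime_X_expand_cyclotomic ℚ hpos⟩ : M)
  have hX : algebraMap O (RatFunc ℚ) u = RatFunc.X := by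
    rw [hu, ← IsScalarTower.algebraMap_apply, RatFunc.algebraMap_X]
  obtain ⟨ρ, hρ⟩ := exists_wellPoisedDifference_zpow_eq (algebraMap O (RatFunc ℚ)) u hd hgcd hN
    (fun t ht => hX ▸ ratFunc_X_zpow_ne_one ht) fun a ha => by
      have h := IsLocalization.map_units O
        (⟨_, isCoprime_one_sub_X_pow_expand_cyclotomic ha⟩ : M)
      rwa [map_sub, map_one, map_pow, ← hu] at h
  obtain ⟨B, hB⟩ := cyclotomic_pow_mul_dvd ℚ hodd
  refine dvd_num_of_eq_algebraMap_mul (O := O) (cyclotomic_pow_mul_dvd_expand_pow ℚ hodd)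
    (a := algebraMap ℚ[X] O B * ρ) ?_
  rw [← mul_assoc, ← map_mul, ← hB, ← hX, hρ, hu]
  simp only [map_mul, map_add, map_sub, map_one, map_pow]

lemma coeff_eq_qInt_div_qInt_mul {n d N : ℕ} {r : ℤ} (hr : r = n - d * N) :
    (1 - (RatFunc.X ^ r) ^ 2 * ((RatFunc.X ^ (d : ℤ)) ^ 2) ^ N) / (1 - (RatFunc.X ^ r) ^ 2) *
      ((-(RatFunc.X ^ r) ^ 2) ^ N * ((RatFunc.X ^ (d : ℤ)) ^ 2) ^ N.choose 2) =
    (-1 : RatFunc ℚ) ^ N *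
      (qInt (RatFunc.X ^ (2 : ℤ)) n / qInt (RatFunc.X ^ (2 : ℤ)) r) *
      RatFunc.X ^ (N * (n + r - d)) := by
  have hx : (RatFunc.X : RatFunc ℚ) ≠ 0 := RatFunc.X_ne_zero
  have h2 : (1 - RatFunc.X ^ (2 : ℤ) : RatFunc ℚ) ≠ 0 :=
    sub_ne_zero.mpr (ratFunc_X_zpow_ne_one two_ne_zero).symm
  have hq : qInt (RatFunc.X ^ (2 : ℤ)) n / qInt (RatFunc.X ^ (2 : ℤ)) r =
      (1 - (RatFunc.X ^ r) ^ 2 * ((RatFunc.X ^ (d : ℤ)) ^ 2) ^ N) / (1 - (RatFunc.X ^ r) ^ 2) := by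
    rw [qInt, qInt, div_div_div_cancel_right₀ h2]
    simp only [← zpow_natCast, ← zpow_mul, ← zpow_add₀ hx]
    congr 3 <;> rw [hr] <;> push_cast <;> ring
  have hexp : (RatFunc.X : RatFunc ℚ) ^ (N * (n + r - d)) * (RatFunc.X ^ (d : ℤ)) ^ N =
      ((RatFunc.X ^ r) ^ 2) ^ N * (RatFunc.X ^ (d : ℤ)) ^ N ^ 2 := by
    simp only [← zpow_natCast, ← zpow_mul, ← zpow_add₀ hx, hr]
    congr 1; push_cast; ring
  have hexp' : (RatFunc.X : RatFunc ℚ) ^ (N * (n + r - d)) =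
      ((RatFunc.X ^ r) ^ 2) ^ N * ((RatFunc.X ^ (d : ℤ)) ^ 2) ^ N.choose 2 := by
    refine mul_right_cancel₀ (pow_ne_zero N (zpow_ne_zero _ hx)) (hexp.trans ?_)
    rw [← sq_pow_choose_two_mul_pow, mul_assoc]
  rw [hq, hexp', neg_pow]
  ring

end RatFunc

theorem stmt2 (n d : ℕ) (r : ℤ) (hpos : 0 < n) (hodd : Odd n) (hd : 0 < d)
    (hgcd : Nat.gcd n d = 1)
    (hr1 : (n : ℤ) - d * n + d ≤ r) (hr2 : r ≤ (n : ℤ))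
    (hnr : (n : ℤ) ≡ r [ZMOD (d : ℤ)]) :
    ((cyclotomic n ℚ).comp (-X)) ^ 3 * (cyclotomic n ℚ) ^ 2 ∣
      RatFunc.num
        ((∑ k ∈ Finset.range ((((n : ℤ) - r) / d).toNat + 1),
            (-1 : RatFunc ℚ) ^ k *
              ((1 + RatFunc.X ^ (2 * (d : ℤ) * k + r)) *
                qPoch (RatFunc.X ^ (2 * r)) (RatFunc.X ^ (2 * (d : ℤ))) k ^ 3) /
              ((1 + RatFunc.X ^ r) *
                qPoch (RatFunc.X ^ (2 * (d : ℤ))) (RatFunc.X ^ (2 * (d : ℤ))) k ^ 3) *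
              RatFunc.X ^ ((d : ℤ) * (k : ℤ) ^ 2 + 2 * (k : ℤ) * ((d : ℤ) - r))) -
          (-1 : RatFunc ℚ) ^ (((n : ℤ) - r) / d).toNat *
            (qInt (RatFunc.X ^ (2 : ℤ)) (n : ℤ) / qInt (RatFunc.X ^ (2 : ℤ)) r) *
            RatFunc.X ^ (((n : ℤ) - r) * ((n : ℤ) + r - d) / d) *
            ∑ k ∈ Finset.range ((((n : ℤ) - r) / d).toNat + 1),
              qPoch (RatFunc.X ^ (2 * r)) (RatFunc.X ^ (2 * (d : ℤ))) k ^ 2 *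
                qPoch (RatFunc.X ^ (d : ℤ)) (RatFunc.X ^ (2 * (d : ℤ))) k /
                (qPoch (RatFunc.X ^ (2 * (d : ℤ))) (RatFunc.X ^ (2 * (d : ℤ))) k *
                  qPoch (RatFunc.X ^ ((d : ℤ) + r)) (RatFunc.X ^ (2 * (d : ℤ))) k *
                  qPoch (RatFunc.X ^ (2 * (d : ℤ) + r)) (RatFunc.X ^ (2 * (d : ℤ))) k) *
                RatFunc.X ^ (2 * (k : ℤ) * ((d : ℤ) - r))) := by
  obtain ⟨N, hN, hr⟩ := exists_eq_sub_mul hd hr1 hr2 hnr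
  have hd0 : (d : ℤ) ≠ 0 := by exact_mod_cast hd.ne'
  have hnr' : (n : ℤ) - r = d * N := by rw [hr, sub_sub_cancel]
  have hcount : (((n : ℤ) - r) / d).toNat = N := by
    rw [hnr', Int.mul_ediv_cancel_left _ hd0, Int.toNat_natCast]
  have hexp : ((n : ℤ) - r) * (n + r - d) / d = N * (n + r - d) := by
    rw [hnr', mul_assoc, Int.mul_ediv_cancel_left _ hd0]
  have hdvd := cyclotomic_dvd_num_wellPoisedDifference hpos hodd hd hgcd hN
  rw [← hr, wellPoisedDifference, coeff_eq_qInt_div_qInt_mul hr,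
    sum_congr rfl fun k _ => wellPoisedAlpha_zpow RatFunc.X_ne_zero d r k,
    sum_congr rfl fun k _ => wellPoisedBeta_zpow RatFunc.X_ne_zero d r k] at hdvd
  rw [hcount, hexp]
  exact hdvd
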